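/- arXiv:1308.3955 — 2 statements merged into one kernel-verified Lean document; each statement's English description precedes it below -/
import Mathlib

section
/- Let G = (A * B; H = K, φ) be the generalized free product of groups A and B with subgroups H ≤ A and K ≤ B amalgamated according to an isomorphism φ: H → K. If A and B are subgroup separable groups and H and K are cyclic normal subgroups of A and B respectively, then G is subgroup separable. -/
/-- A subgroup `H` of a group `G` is finitely separable if for every `g ∈ G` with `g ∉ H`
there is a homomorphism of `G` onto a finite group under which the image of `g` does not
belong to the image of `H`. -/
def FinitelySeparable {G : Type*} [Group G] (H : Subgroup G) : Prop :=
  ∀ g : G, g ∉ H →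
    ∃ (Q : Type) (_ : Group Q) (_ : Finite Q) (f : G →* Q),
      Function.Surjective f ∧ f g ∉ H.map f

/-- A group is subgroup separable if all of its finitely generated subgroups are
finitely separable. -/
def SubgroupSeparable (G : Type*) [Group G] : Prop :=
  ∀ H : Subgroup G, H.FG → FinitelySeparable H

/-- The two factors of the generalized free product, indexed by `Bool`. -/
abbrev amalgFactor (A B : Type) : Bool → Type
  | true => A
  | false => B

instance (A B : Type) [Group A] [Group B] : ∀ b, Group (amalgFactor A B b)
  | true => ‹Group A›
  | false => ‹Group B›

/-- The pair of maps identifying the amalgamated subgroup `H = K` inside the two factors: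
the inclusion `H ↪ A` and the composition of `φ : H ≃ K` with the inclusion `K ↪ B`. -/
def amalgMaps {A B : Type} [Group A] [Group B] (H : Subgroup A) (K : Subgroup B)
    (φ : H ≃* K) : ∀ b, ↥H →* amalgFactor A B b
  | true => H.subtype
  | false => K.subtype.comp φ.toMonoidHom

/-- The generalized free product `(A ∗ B; H = K, φ)`, i.e. the amalgamated free product
(pushout) of `A` and `B` over `H` identified with `K` via `φ`. -/
abbrev AmalgamatedProduct {A B : Type} [Group A] [Group B] (H : Subgroup A) (K : Subgroup B)
    (φ : H ≃* K) : Type :=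
  Monoid.PushoutI (amalgMaps H K φ)

/-!
A finitely generated subgroup `L` of a free product is separated from `g ∉ L` by a finite
permutation representation: the action on the cosets of `L` matters only at the finitely many
points met when evaluating the generators of `L` and `g` letter by letter at the coset `L`.
Separability of a factor yields a finite set with an action of this factor agreeing with the
original one there, and such sets for the different factors can be embedded in a common finite
set, since in a free product the actions of the factors are independent.

In an amalgam over a normal cyclic subgroup `⟨z⟩`, the quotient by `⟨z⟩` is the free product of
the quotients of the factors, so finitely generated subgroups containing `z` are finitely
separable. An arbitrary finitely generated `L` is the intersection of the subgroups `L' = L⟨zᵐ⟩`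
with `m ≠ 0`. If `M` has finite index and `M ∩ ⟨z⟩ ≤ ⟨zᵐ⟩`, then `L' ∩ M = (L' ∩ M)⟨z⟩ ∩ M` is
finitely separable, and therefore so is `L'`. Such an `M` is the kernel of a finite permutation
representation: the factors have finite quotients in which the amalgamated generators have the
same order, and in the regular representation of the product of these quotients elements of equal
order are conjugate, so after conjugation the amalgamated generators act by the same permutation.
-/

universe u v w

section Subgroup

variable {G Q : Type*} [Group G] [Group Q]

theorem finiteIndex_comap (f : G →* Q) (U : Subgroup Q) [U.FiniteIndex] :
    (U.comap f).FiniteIndex :=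
  ⟨by
    rw [U.index_comap f]
    exact Subgroup.FiniteIndex.index_ne_zero (H := U.subgroupOf f.range)⟩

theorem finiteIndex_stabilizer {X : Type*} [MulAction G X] [Finite X] (x : X) :
    (MulAction.stabilizer G x).FiniteIndex :=
  ⟨by
    rw [MulAction.index_stabilizer]
    exact ((Set.ncard_pos (Set.toFinite _)).2 (MulAction.nonempty_orbit x)).ne'⟩

theorem fg_zpowers (z : G) : (Subgroup.zpowers z).FG := by
  rw [Subgroup.zpowers_eq_closure, ← Finset.coe_singleton]
  exact ⟨_, rfl⟩

theorem fg_map (f : G →* Q) {L : Subgroup G} (hL : L.FG) :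
    (L.map f).FG := by
  rw [Subgroup.fg_iff_submonoid_fg] at hL ⊢
  exact hL.map f

theorem fg_inf_of_finiteIndex {L M : Subgroup G} (hL : L.FG) [M.FiniteIndex] : (L ⊓ M).FG := by
  have : Group.FG L := (Group.fg_iff_subgroup_fg L).2 hL
  rw [inf_comm, ← Subgroup.subgroupOf_map_subtype]
  exact fg_map _ ((Group.fg_iff_subgroup_fg _).1 inferInstance)

theorem normal_zpowers_zpow {z : G} (hz : (Subgroup.zpowers z).Normal) (m : ℤ) :
    (Subgroup.zpowers (z ^ m)).Normal := by
  constructor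
  rintro _ ⟨j, rfl⟩ g
  obtain ⟨r, hr : z ^ r = g * z * g⁻¹⟩ := hz.conj_mem z (Subgroup.mem_zpowers z) g
  refine ⟨r * j, ?_⟩
  simp only [← conj_zpow, ← hr, ← zpow_mul, mul_left_comm, mul_comm]

theorem range_eq_zpowers (f : G →* Q) {g : G} (hg : ∀ x, x ∈ Subgroup.zpowers g) :
    f.range = Subgroup.zpowers (f g) := by
  rw [f.range_eq_map, ← (Subgroup.eq_top_iff' _).2 hg, f.map_zpowers]

end Subgroup

section FinitelySeparable

variable {G Q : Type*} [Group G] [Group Q]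

theorem finitelySeparable_iff {L : Subgroup G} :
    FinitelySeparable L ↔ ∀ g ∉ L, ∃ U : Subgroup G, U.FiniteIndex ∧ L ≤ U ∧ g ∉ U := by
  refine ⟨fun h g hg ↦ ?_, fun h g hg ↦ ?_⟩
  · obtain ⟨Q, _, _, f, -, hf⟩ := h g hg
    exact ⟨(L.map f).comap f, finiteIndex_comap f _, L.le_comap_map f, hf⟩
  · obtain ⟨U, _, hLU, hgU⟩ := h g hg
    obtain ⟨Q, _, _, ⟨e⟩⟩ := Finite.exists_type_univ_nonempty_mulEquiv.{_, 0} (G ⧸ U.normalCore)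
    refine ⟨Q, _, inferInstance, e.toMonoidHom.comp (QuotientGroup.mk' _),
      e.surjective.comp (QuotientGroup.mk'_surjective _), ?_⟩
    rintro ⟨l, hl, hlg⟩
    have hlg' : l⁻¹ * g ∈ U.normalCore := QuotientGroup.eq.1 (e.injective hlg)
    exact hgU ((U.mul_mem_cancel_left (U.inv_mem (hLU hl))).1 (U.normalCore_le hlg'))

namespace FinitelySeparable

theorem of_finiteIndex (U : Subgroup G) [U.FiniteIndex] : FinitelySeparable U :=
  finitelySeparable_iff.2 fun _ hg ↦ ⟨U, inferInstance, le_rfl, hg⟩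

theorem of_forall_exists_ge {L : Subgroup G}
    (h : ∀ g ∉ L, ∃ V : Subgroup G, FinitelySeparable V ∧ L ≤ V ∧ g ∉ V) :
    FinitelySeparable L := by
  refine finitelySeparable_iff.2 fun g hg ↦ ?_
  obtain ⟨V, hV, hLV, hgV⟩ := h g hg
  obtain ⟨U, hU, hVU, hgU⟩ := finitelySeparable_iff.1 hV g hgV
  exact ⟨U, hU, hLV.trans hVU, hgU⟩

theorem inf {L M : Subgroup G} (hL : FinitelySeparable L) (hM : FinitelySeparable M) :
    FinitelySeparable (L ⊓ M) := by
  refine of_forall_exists_ge fun g hg ↦ ?_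
  by_cases hgL : g ∈ L
  · exact ⟨M, hM, inf_le_right, fun hgM ↦ hg ⟨hgL, hgM⟩⟩
  · exact ⟨L, hL, inf_le_left, hgL⟩

theorem comap {L : Subgroup Q} (hL : FinitelySeparable L) (f : G →* Q) :
    FinitelySeparable (L.comap f) := by
  refine finitelySeparable_iff.2 fun g hg ↦ ?_
  obtain ⟨U, _, hLU, hgU⟩ := finitelySeparable_iff.1 hL (f g) hg
  exact ⟨U.comap f, finiteIndex_comap f U, Subgroup.comap_mono hLU, hgU⟩

theorem of_comap {f : G →* Q} (hf : Function.Surjective f) {L : Subgroup Q}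
    (h : FinitelySeparable (L.comap f)) : FinitelySeparable L := by
  refine finitelySeparable_iff.2 fun q hq ↦ ?_
  obtain ⟨g, rfl⟩ := hf q
  obtain ⟨U, hU, hLU, hgU⟩ := finitelySeparable_iff.1 h g hq
  have hker : f.ker ≤ U := (Subgroup.ker_le_comap f L).trans hLU
  refine ⟨U.map f, ⟨?_⟩, ?_, ?_⟩
  · rw [U.index_map_eq hf hker]
    exact hU.index_ne_zero
  · rw [← Subgroup.map_comap_eq_self_of_surjective hf L]
    exact Subgroup.map_mono hLU
  · rwa [← Subgroup.mem_comap, Subgroup.comap_map_eq_self hker]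

/-- Only the elements `g = l * n` with `l ∈ L` and `n` in the normal core `N` of `M` are not already
excluded by `L ⊔ N`; for those, a subgroup `U` separating `n` from `L ⊓ M` gives
`L ⊔ (U.normalCore ⊓ N)`. -/
theorem of_inf_finiteIndex {L M : Subgroup G} [M.FiniteIndex] (h : FinitelySeparable (L ⊓ M)) :
    FinitelySeparable L := by
  set N := M.normalCore
  refine finitelySeparable_iff.2 fun g hg ↦ ?_
  by_cases hgN : g ∈ L ⊔ N
  swap
  · exact ⟨L ⊔ N, Subgroup.finiteIndex_of_le le_sup_right, le_sup_left, hgN⟩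
  obtain ⟨l, hl, n, hn, rfl⟩ := Subgroup.mem_sup_of_normal_right.1 hgN
  have hnL : n ∉ L := fun hnL ↦ hg (L.mul_mem hl hnL)
  obtain ⟨U, _, hLU, hnU⟩ := finitelySeparable_iff.1 h n fun hn' ↦ hnL hn'.1
  refine ⟨L ⊔ (U.normalCore ⊓ N), Subgroup.finiteIndex_of_le le_sup_right, le_sup_left,
    fun hmem ↦ hnU ?_⟩
  rw [Subgroup.mul_mem_cancel_left _ (Subgroup.mem_sup_left hl)] at hmem
  obtain ⟨l', hl', u, hu, rfl⟩ := Subgroup.mem_sup_of_normal_right.1 hmem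
  have hl'M : l' ∈ M :=
    (M.mul_mem_cancel_right (M.normalCore_le hu.2)).1 (M.normalCore_le hn)
  exact U.mul_mem (hLU ⟨hl', hl'M⟩) (U.normalCore_le hu.1)

theorem exists_finiteIndex_forall_mem {L : Subgroup G} (hL : FinitelySeparable L) {E : Set G}
    (hE : E.Finite) : ∃ U : Subgroup G, U.FiniteIndex ∧ L ≤ U ∧ ∀ e ∈ E, e ∈ U → e ∈ L := by
  have h (e : G) : ∃ U : Subgroup G, U.FiniteIndex ∧ L ≤ U ∧ (e ∈ U → e ∈ L) := by
    by_cases he : e ∈ L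
    · exact ⟨⊤, inferInstance, le_top, fun _ ↦ he⟩
    · obtain ⟨U, hU, hLU, heU⟩ := finitelySeparable_iff.1 hL e he
      exact ⟨U, hU, hLU, fun h ↦ absurd h heU⟩
  choose U hU hLU heU using h
  have := hE.to_subtype
  exact ⟨⨅ e : E, U e, Subgroup.finiteIndex_iInf fun e ↦ hU e, le_iInf fun e ↦ hLU e,
    fun e he h ↦ heU e (Subgroup.mem_iInf.1 h ⟨e, he⟩)⟩

end FinitelySeparable

theorem SubgroupSeparable.quotient (hG : SubgroupSeparable G) {N : Subgroup G} [N.Normal]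
    (hN : N.FG) : SubgroupSeparable (G ⧸ N) := by
  intro L hL
  obtain ⟨S, rfl⟩ := hL
  have hS : Subgroup.closure (S : Set (G ⧸ N)) =
      (Subgroup.closure (Quotient.out '' (S : Set (G ⧸ N)))).map (QuotientGroup.mk' N) := by
    rw [MonoidHom.map_closure, Set.image_image]
    simp
  refine FinitelySeparable.of_comap (QuotientGroup.mk'_surjective N) (hG _ ?_)
  rw [hS, Subgroup.comap_map_eq, QuotientGroup.ker_mk']
  exact Subgroup.FG.sup ((Subgroup.fg_iff _).2 ⟨_, rfl, S.finite_toSet.image _⟩) hN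

end FinitelySeparable

section EquivariantOn

variable {A : Type u} {X : Type w} {Y : Type*} [Group A] [MulAction A X]

/-- A map between `A`-sets that commutes with the action of `a` at `x` for all `(a, x) ∈ E`. -/
def EquivariantOn [MulAction A Y] (E : Set (A × X)) (f : X → Y) : Prop :=
  ∀ e ∈ E, f (e.1 • e.2) = e.1 • f e.2

open MulAction in
/-- With `a z • y = z` for all `z` in the orbit of `y`, the map `z ↦ a z` into `A ⧸ stabilizer A y`
is equivariant. The stabilizer may have infinite index, but equivariance on `E` only uses the
finitely many elements `(a (s • z))⁻¹ * s * a z`, so it can be replaced by a subgroup of finite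
index; the points outside the orbit go to `none`. -/
theorem SubgroupSeparable.exists_equivariantOn_ne (hA : SubgroupSeparable A) {E : Set (A × X)}
    (hE : E.Finite) {x y : X} (hxy : x ≠ y) :
    ∃ (Y : Type u) (_ : Finite Y) (_ : MulAction A Y) (f : X → Y),
      EquivariantOn E f ∧ f x ≠ f y := by
  classical
  have hrep (z : X) : ∃ a : A, z ∈ orbit A y → a • y = z := by
    by_cases hz : z ∈ orbit A y
    · exact hz.imp fun a ha _ ↦ ha
    · exact ⟨1, fun h ↦ absurd h hz⟩
  choose a ha using hrep
  have horbit (s : A) (z : X) : s • z ∈ orbit A y ↔ z ∈ orbit A y := by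
    rw [← orbit_eq_iff, orbit_smul, orbit_eq_iff]
  let t (e : A × X) : A := (a (e.1 • e.2))⁻¹ * e.1 * a e.2
  let L := Subgroup.closure (t '' {e ∈ E | e.2 ∈ orbit A y})
  have hL : L ≤ stabilizer A y := by
    rw [Subgroup.closure_le]
    rintro _ ⟨⟨s, z⟩, ⟨-, hz⟩, rfl⟩
    have hsz : s • z ∈ orbit A y := (horbit s z).2 hz
    simp [t, mul_smul, ha z hz, inv_smul_eq_iff, ha _ hsz]
  have hsep : FinitelySeparable L := hA L
    ((Subgroup.fg_iff _).2 ⟨_, rfl, (hE.subset (Set.sep_subset _ _)).image t⟩)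
  have hxyL (hx : x ∈ orbit A y) : (a x)⁻¹ * a y ∉ L := fun h ↦ hxy <| by
    have hstab := hL h
    rw [mem_stabilizer_iff, mul_smul, inv_smul_eq_iff, ha x hx, ha y (mem_orbit_self y)] at hstab
    exact hstab.symm
  obtain ⟨U, _, hLU, hU⟩ := hsep.exists_finiteIndex_forall_mem
    (Set.finite_singleton ((a x)⁻¹ * a y))
  refine ⟨Option (A ⧸ U), inferInstance, inferInstance,
    fun z ↦ if z ∈ orbit A y then some (a z : A ⧸ U) else none, ?_, ?_⟩
  · rintro ⟨s, z⟩ hsz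
    by_cases hz : z ∈ orbit A y
    · have htU : t (s, z) ∈ U := hLU (Subgroup.subset_closure ⟨_, ⟨hsz, hz⟩, rfl⟩)
      simpa [hz, horbit, QuotientGroup.eq, ← mul_assoc] using htU
    · simp [hz, horbit]
  · by_cases hx : x ∈ orbit A y
    · simpa [hx, QuotientGroup.eq] using fun h ↦ hxyL hx (hU _ rfl h)
    · simp [hx]

theorem SubgroupSeparable.exists_equivariantOn_injOn (hA : SubgroupSeparable A) {E : Set (A × X)}
    (hE : E.Finite) {F : Set X} (hF : F.Finite) :
    ∃ (Y : Type (max u w)) (_ : Finite Y) (_ : MulAction A Y) (f : X → Y),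
      EquivariantOn E f ∧ Set.InjOn f F := by
  have hsep (p : F.offDiag) := hA.exists_equivariantOn_ne hE p.2.2.2
  choose Y _ _ f hf hne using hsep
  have := hF.offDiag.to_subtype
  refine ⟨∀ p, Y p, inferInstance, inferInstance, fun x p ↦ f p x, ?_, ?_⟩
  · exact fun e he ↦ funext fun p ↦ hf p e he
  · intro x hx y hy hxy
    by_contra hne'
    exact hne ⟨(x, y), hx, hy, hne'⟩ (congrFun hxy _)

end EquivariantOn

section FreeProduct

/-- `Y k` is embedded by recording the fibre of `f k` over a point, and the point itself when this
fibre does not meet `F`. -/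
theorem exists_embeddings_comp_eqOn {κ : Type u} [Finite κ] {X : Type v} {Y : κ → Type w}
    [∀ k, Finite (Y k)] {F : Set X} (hF : F.Finite) {f : ∀ k, X → Y k}
    (hf : ∀ k, Set.InjOn (f k) F) :
    ∃ (Z : Type (max u v w)) (_ : Finite Z) (c : X → Z) (j : ∀ k, Y k ↪ Z),
      Set.InjOn c F ∧ ∀ k, Set.EqOn (j k ∘ f k) c F := by
  classical
  have := hF.to_subtype
  let j (k : κ) (y : Y k) : Set F × Option (Σ k, Y k) :=
    ({x | f k x = y}, if y ∈ f k '' F then none else some ⟨k, y⟩)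
  have hj (k : κ) : Function.Injective (j k) := by
    intro y y' h
    obtain ⟨hfib, hpt⟩ := Prod.mk.inj h
    by_cases hy : y ∈ f k '' F
    · obtain ⟨x, hx, rfl⟩ := hy
      exact (Set.ext_iff.1 hfib ⟨x, hx⟩).1 rfl
    · by_cases hy' : y' ∈ f k '' F
      · simp [hy, hy'] at hpt
      · simpa [hy, hy'] using hpt
  refine ⟨Set F × Option (Σ k, Y k), inferInstance, fun x ↦ ({x' | x' = x}, none),
    fun k ↦ ⟨j k, hj k⟩, ?_, ?_⟩
  · intro x hx x' _ h
    exact (Set.ext_iff.1 (Prod.mk.inj h).1 ⟨x, hx⟩).1 rfl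
  · intro k x hx
    refine Prod.ext (Set.ext fun x' ↦ (hf k).eq_iff x'.2 hx) ?_
    exact if_pos (Set.mem_image_of_mem _ hx)

open Monoid

variable {ι : Type v} {G : ι → Type u} [∀ i, Group (G i)]
  {X : Type w} [MulAction (CoprodI G) X]

theorem exists_finite_letters_smul_eq (g : CoprodI G) (x : X) :
    ∃ E : Set ((Σ i, G i) × X), E.Finite ∧
      ∀ {Y : Type*} [MulAction (CoprodI G) Y] (f : X → Y),
        (∀ e ∈ E, f (CoprodI.of e.1.2 • e.2) = CoprodI.of e.1.2 • f e.2) →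
          f (g • x) = g • f x := by
  induction g using CoprodI.induction_on generalizing x with
  | one => exact ⟨∅, Set.finite_empty, fun f _ ↦ by simp⟩
  | of i s => exact ⟨{(⟨i, s⟩, x)}, Set.finite_singleton _, fun f hf ↦ hf _ rfl⟩
  | mul g h ihg ihh =>
    obtain ⟨Eh, hEh, hh⟩ := ihh x
    obtain ⟨Eg, hEg, hg⟩ := ihg (h • x)
    refine ⟨Eg ∪ Eh, hEg.union hEh, fun f hf ↦ ?_⟩
    rw [mul_smul, hg f fun e he ↦ hf e (.inl he), hh f fun e he ↦ hf e (.inr he), mul_smul]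

theorem exists_finite_coprodI_action (hG : ∀ i, SubgroupSeparable (G i))
    {E : Set ((Σ i, G i) × X)} (hE : E.Finite) {F : Set X} (hF : F.Finite) :
    ∃ (Y : Type (max u v w)) (_ : Finite Y) (_ : MulAction (CoprodI G) Y) (f : X → Y),
      (∀ e ∈ E, f (CoprodI.of e.1.2 • e.2) = CoprodI.of e.1.2 • f e.2) ∧ Set.InjOn f F := by
  classical
  let F' : Set X := F ∪ ((fun e ↦ e.2) '' E ∪ (fun e ↦ CoprodI.of e.1.2 • e.2) '' E)
  have hF' : F'.Finite := hF.union ((hE.image _).union (hE.image _))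
  let _ (i : ι) : MulAction (G i) X := MulAction.compHom X (CoprodI.of : G i →* CoprodI G)
  have hEfin (i : ι) : {e : G i × X | ((⟨i, e.1⟩, e.2) : (Σ i, G i) × X) ∈ E}.Finite :=
    hE.preimage <| Function.Injective.injOn <|
      sigma_mk_injective.prodMap Function.injective_id
  choose Y _ _ f hf hinj using fun i ↦ (hG i).exists_equivariantOn_injOn (hEfin i) hF'
  let I := (fun e ↦ e.1.1) '' E
  have : Finite I := (hE.image _).to_subtype
  obtain ⟨Z, _, c, j, hc, hj⟩ := exists_embeddings_comp_eqOn hF' fun i : I ↦ hinj i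
  let σ : CoprodI G →* Equiv.Perm Z := CoprodI.lift fun i ↦
    if h : i ∈ I then (Equiv.Perm.viaEmbeddingHom (j ⟨i, h⟩)).comp (MulAction.toPermHom (G i) (Y i))
    else 1
  let _ : MulAction (CoprodI G) Z := MulAction.compHom Z σ
  refine ⟨Z, inferInstance, inferInstance, c, ?_, hc.mono Set.subset_union_left⟩
  rintro ⟨⟨i, s⟩, x⟩ he
  have hi : i ∈ I := ⟨_, he, rfl⟩
  have hx : x ∈ F' := .inr (.inl ⟨_, he, rfl⟩)
  have hsx : CoprodI.of s • x ∈ F' := .inr (.inr ⟨_, he, rfl⟩)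
  have hσ : σ (CoprodI.of s) =
      (MulAction.toPerm s : Equiv.Perm (Y i)).viaEmbedding (j ⟨i, hi⟩) := by
    simp [σ, hi, Equiv.Perm.viaEmbeddingHom_apply]
  calc c (CoprodI.of s • x) = j ⟨i, hi⟩ (f i (s • x)) := (hj ⟨i, hi⟩ hsx).symm
    _ = j ⟨i, hi⟩ (s • f i x) := by rw [hf i (s, x) he]
    _ = σ (CoprodI.of s) (j ⟨i, hi⟩ (f i x)) := by
      rw [hσ, Equiv.Perm.viaEmbedding_apply, MulAction.toPerm_apply]
    _ = CoprodI.of s • c x := congrArg (σ _) (hj ⟨i, hi⟩ hx)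

theorem SubgroupSeparable.coprodI (hG : ∀ i, SubgroupSeparable (G i)) :
    SubgroupSeparable (CoprodI G) := by
  intro L hL
  obtain ⟨T, rfl, hT⟩ := (Subgroup.fg_iff L).1 hL
  set L := Subgroup.closure T
  refine finitelySeparable_iff.2 fun g hg ↦ ?_
  let x₀ : CoprodI G ⧸ L := (1 : CoprodI G)
  have hfix {t : CoprodI G} : t • x₀ = x₀ ↔ t ∈ L := by
    rw [← MulAction.mem_stabilizer_iff, MulAction.stabilizer_quotient]
  choose E hE hEw using fun t : CoprodI G ↦ exists_finite_letters_smul_eq t x₀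
  obtain ⟨Y, _, _, f, hf, hinj⟩ := exists_finite_coprodI_action hG
    ((hT.insert g).biUnion fun t _ ↦ hE t) (Set.toFinite {x₀, g • x₀})
  have hsmul {t : CoprodI G} (ht : t ∈ insert g T) : f (t • x₀) = t • f x₀ :=
    hEw t f fun e he ↦ hf e (Set.mem_biUnion ht he)
  refine ⟨MulAction.stabilizer (CoprodI G) (f x₀), finiteIndex_stabilizer _, ?_, fun hgU ↦ hg ?_⟩
  · refine (Subgroup.closure_le _).2 fun t ht ↦ ?_
    rw [SetLike.mem_coe, MulAction.mem_stabilizer_iff, ← hsmul (.inr ht),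
      hfix.2 (Subgroup.subset_closure ht)]
  · rw [MulAction.mem_stabilizer_iff, ← hsmul (.inl rfl)] at hgU
    exact hfix.1 (hinj (by simp) (by simp) hgU)

end FreeProduct

section CyclicKernel

open Subgroup

variable {G Q : Type*} [Group G] [Group Q]

theorem SubgroupSeparable.finitelySeparable_of_ker_le (hQ : SubgroupSeparable Q) {f : G →* Q}
    {L : Subgroup G} (hL : L.FG) (hker : f.ker ≤ L) : FinitelySeparable L := by
  rw [← comap_map_eq_self hker]
  exact (hQ _ (fg_map f hL)).comap f

/-- With `K = L ⊓ M`, finite separability passes from `K ⊔ ⟨z⟩`, which contains the kernel, to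
`K = (K ⊔ ⟨z⟩) ⊓ M`, and from there to `L`. -/
theorem SubgroupSeparable.finitelySeparable_of_inf_zpowers_le (hQ : SubgroupSeparable Q)
    {f : G →* Q} {z : G} (hker : f.ker = zpowers z) {L M : Subgroup G} (hL : L.FG)
    [M.FiniteIndex] (hM : M ⊓ zpowers z ≤ L) : FinitelySeparable L := by
  have : (zpowers z).Normal := hker ▸ f.normal_ker
  set K := L ⊓ M
  have hK : (K ⊔ zpowers z) ⊓ M = K := by
    refine le_antisymm ?_ (le_inf le_sup_left inf_le_right)
    rintro _ ⟨hg, hgM⟩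
    obtain ⟨l, hl, n, hn, rfl⟩ := mem_sup_of_normal_right.1 hg
    have hnM : n ∈ M := (M.mul_mem_cancel_left hl.2).1 hgM
    exact ⟨L.mul_mem hl.1 (hM ⟨hnM, hn⟩), hgM⟩
  have hsup : FinitelySeparable (K ⊔ zpowers z) :=
    hQ.finitelySeparable_of_ker_le ((fg_inf_of_finiteIndex hL).sup (fg_zpowers z))
      (hker.trans_le le_sup_right)
  have hKsep : FinitelySeparable K := hK.subst (hsup.inf (.of_finiteIndex M))
  exact .of_inf_finiteIndex hKsep

theorem exists_zpow_notMem_sup_zpowers_zpow {z : G} (hz : (zpowers z).Normal) {L : Subgroup G}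
    {k : ℤ} (hk : z ^ k ∉ L) : ∃ m : ℤ, m ≠ 0 ∧ z ^ k ∉ L ⊔ zpowers (z ^ m) := by
  by_cases hL : ∃ m : ℤ, m ≠ 0 ∧ z ^ m ∈ L
  · obtain ⟨m, hm, hzm⟩ := hL
    exact ⟨m, hm, by rwa [sup_eq_left.2 (zpowers_le.2 hzm)]⟩
  push Not at hL
  refine ⟨|k| + 1, by positivity, fun h ↦ ?_⟩
  have := normal_zpowers_zpow hz (|k| + 1)
  obtain ⟨l, hl, _, ⟨j, rfl⟩, hlj : l * (z ^ (|k| + 1)) ^ j = z ^ k⟩ :=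
    mem_sup_of_normal_right.1 h
  rw [← zpow_mul, ← eq_mul_inv_iff_mul_eq, ← zpow_sub] at hlj
  have hkj : k - (|k| + 1) * j = 0 := by
    by_contra hne
    exact hL _ hne (hlj ▸ hl)
  have hk0 : k = 0 := Int.eq_zero_of_abs_lt_dvd ⟨j, sub_eq_zero.1 hkj⟩ (lt_add_one |k|)
  exact hk (by simp [hk0])

theorem exists_notMem_sup_zpowers_zpow {z : G} (hz : (zpowers z).Normal) {L : Subgroup G} {g : G}
    (hg : g ∉ L) : ∃ m : ℤ, m ≠ 0 ∧ g ∉ L ⊔ zpowers (z ^ m) := by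
  by_cases hgz : g ∈ L ⊔ zpowers z
  · obtain ⟨l, hl, _, ⟨k, rfl⟩, rfl⟩ := mem_sup_of_normal_right.1 hgz
    have hk : z ^ k ∉ L := fun hk ↦ hg (L.mul_mem hl hk)
    obtain ⟨m, hm, hkm⟩ := exists_zpow_notMem_sup_zpowers_zpow hz hk
    exact ⟨m, hm, fun h ↦ hkm ((Subgroup.mul_mem_cancel_left _ (mem_sup_left hl)).1 h)⟩
  · exact ⟨1, one_ne_zero, by simpa using hgz⟩

theorem SubgroupSeparable.of_ker_eq_zpowers (hQ : SubgroupSeparable Q) {f : G →* Q} {z : G}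
    (hker : f.ker = zpowers z) (hz : ∀ m : ℤ, m ≠ 0 →
      ∃ M : Subgroup G, M.FiniteIndex ∧ M ⊓ zpowers z ≤ zpowers (z ^ m)) :
    SubgroupSeparable G := by
  refine fun L hL ↦ .of_forall_exists_ge fun g hg ↦ ?_
  obtain ⟨m, hm, hgm⟩ := exists_notMem_sup_zpowers_zpow (hker ▸ f.normal_ker) hg
  obtain ⟨M, _, hM⟩ := hz m hm
  exact ⟨_, hQ.finitelySeparable_of_inf_zpowers_le hker (hL.sup (fg_zpowers _))
    (hM.trans le_sup_right), le_sup_left, hgm⟩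

theorem SubgroupSeparable.exists_normal_inf_zpowers_eq {G : Type*} [Group G]
    (hG : SubgroupSeparable G) {z : G} (hz : (zpowers z).Normal) {m : ℤ} (hm : m ≠ 0) :
    ∃ M : Subgroup G, M.Normal ∧ M.FiniteIndex ∧ M ⊓ zpowers z = zpowers (z ^ m) := by
  have hnormal := normal_zpowers_zpow hz m
  obtain ⟨U, _, hU, hE⟩ := (hG _ (fg_zpowers (z ^ m))).exists_finiteIndex_forall_mem
    ((Set.finite_Ico 0 |m|).image (z ^ ·))
  refine ⟨U.normalCore, inferInstance, inferInstance, le_antisymm ?_ <|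
    le_inf (normal_le_normalCore.2 hU) (zpowers_le.2 ⟨m, rfl⟩)⟩
  rintro _ ⟨hkU, k, rfl⟩
  have hk : z ^ k = z ^ (k % m) * (z ^ m) ^ (k / m) := by
    rw [← zpow_mul, ← zpow_add, Int.emod_add_mul_ediv]
  have hdiv : (z ^ m) ^ (k / m) ∈ zpowers (z ^ m) := ⟨_, rfl⟩
  have hmodU : z ^ (k % m) ∈ U :=
    (U.mul_mem_cancel_right (hU hdiv)).1 (hk ▸ U.normalCore_le hkU)
  have hmod : z ^ (k % m) ∈ zpowers (z ^ m) :=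
    hE _ ⟨k % m, ⟨Int.emod_nonneg _ hm, Int.emod_lt_abs _ hm⟩, rfl⟩ hmodU
  simpa only [hk] using mul_mem hmod hdiv

end CyclicKernel

section Semiregular

open Equiv

variable {α : Type*}

/-- A permutation is semiregular if its powers other than `1` have no fixed point, that is, if the
cyclic group it generates acts freely. -/
def IsSemiregular (σ : Perm α) : Prop :=
  ∀ (n : ℕ) (x : α), (σ ^ n) x = x → σ ^ n = 1

namespace IsSemiregular

theorem eq_orderOf_of_mem_cycleType [Fintype α] [DecidableEq α] {σ : Perm α}
    (hσ : IsSemiregular σ) {n : ℕ} (hn : n ∈ σ.cycleType) : n = orderOf σ := by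
  refine (Perm.dvd_of_mem_cycleType hn).antisymm (orderOf_dvd_of_pow_eq_one ?_)
  obtain ⟨c, τ, rfl, hcτ, hc, rfl⟩ := Perm.mem_cycleType_iff.1 hn
  obtain ⟨x, hx, -⟩ := id hc
  have hτx : τ x = x := (hcτ x).resolve_left hx
  refine hσ _ x ?_
  rw [hcτ.commute.mul_pow, ← hc.orderOf, pow_orderOf_eq_one, one_mul]
  exact Perm.pow_apply_eq_self_of_apply_eq_self hτx _

theorem cycleType_eq_replicate [Fintype α] [DecidableEq α] {σ : Perm α}
    (hσ : IsSemiregular σ) (hne : σ ≠ 1) :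
    σ.cycleType = Multiset.replicate (Fintype.card α / orderOf σ) (orderOf σ) := by
  have hrep : σ.cycleType = Multiset.replicate σ.cycleType.card (orderOf σ) :=
    Multiset.eq_replicate.2 ⟨rfl, fun _ hn ↦ hσ.eq_orderOf_of_mem_cycleType hn⟩
  have hsupp : σ.support = Finset.univ := Finset.eq_univ_iff_forall.2 fun x ↦
    Perm.mem_support.2 fun hx ↦ hne (by simpa using hσ 1 x (by simpa using hx))
  have hcard : σ.cycleType.card * orderOf σ = Fintype.card α := by
    rw [← smul_eq_mul, ← Multiset.sum_replicate, ← hrep, σ.sum_cycleType, hsupp,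
      Finset.card_univ]
  rw [← hcard, Nat.mul_div_cancel _ (orderOf_pos σ)]
  exact hrep

theorem isConj [Finite α] {σ τ : Perm α} (hσ : IsSemiregular σ) (hτ : IsSemiregular τ)
    (h : orderOf σ = orderOf τ) : IsConj σ τ := by
  classical
  have := Fintype.ofFinite α
  by_cases hσ1 : σ = 1
  · obtain rfl : τ = 1 := orderOf_eq_one_iff.1 (by rw [← h, hσ1, orderOf_one])
    rw [hσ1]
  · have hτ1 : τ ≠ 1 := fun hτ1 ↦ hσ1 (orderOf_eq_one_iff.1 (by rw [h, hτ1, orderOf_one]))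
    rw [Perm.isConj_iff_cycleType_eq, hσ.cycleType_eq_replicate hσ1,
      hτ.cycleType_eq_replicate hτ1, h]

end IsSemiregular

theorem isSemiregular_toPerm {R : Type*} [Group R] (a : R) :
    IsSemiregular (MulAction.toPerm a : Perm R) := by
  intro n x hx
  have hn : (MulAction.toPerm a : Perm R) ^ n = MulAction.toPerm (a ^ n) :=
    (map_pow (MulAction.toPermHom R R) a n).symm
  rw [hn] at hx ⊢
  have ha : a ^ n = 1 := by simpa using hx
  rw [ha]
  exact map_one (MulAction.toPermHom R R)

theorem exists_injective_perm_apply_eq {ι : Type v} [Finite ι] [Nonempty ι] {P : ι → Type u}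
    [∀ i, Group (P i)] [∀ i, Finite (P i)] {p : ∀ i, P i}
    (hp : ∀ i j, orderOf (p i) = orderOf (p j)) :
    ∃ (Z : Type (max u v)) (_ : Finite Z) (r : ∀ i, P i →* Perm Z) (τ : Perm Z),
      (∀ i, Function.Injective (r i)) ∧ ∀ i, r i (p i) = τ := by
  classical
  let i₀ : ι := Classical.arbitrary ι
  let ρ (i : ι) : P i →* Perm (∀ i, P i) :=
    (MulAction.toPermHom (∀ i, P i) (∀ i, P i)).comp (MonoidHom.mulSingle P i)
  have hρ (i : ι) : Function.Injective (ρ i) :=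
    MulAction.toPerm_injective.comp (Pi.mulSingle_injective i)
  have hconj (i : ι) : IsConj (ρ i (p i)) (ρ i₀ (p i₀)) :=
    (isSemiregular_toPerm _).isConj (isSemiregular_toPerm _) <|
      (orderOf_injective _ (hρ i) _).trans <|
        (hp i i₀).trans (orderOf_injective _ (hρ i₀) _).symm
  choose c hc using fun i ↦ isConj_iff.1 (hconj i)
  exact ⟨∀ i, P i, inferInstance, fun i ↦ (MulAut.conj (c i)).toMonoidHom.comp (ρ i),
    ρ i₀ (p i₀), fun i ↦ (MulAut.conj (c i)).injective.comp (hρ i), hc⟩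

end Semiregular

section Amalgam

open Monoid Subgroup

variable {ι : Type v} {H : Type w} [Group H] {G : ι → Type u} [∀ i, Group (G i)]
  {φ : ∀ i, H →* G i}

theorem exists_finite_perm_comap_base_ker_eq [Finite ι] [Nonempty ι] [IsCyclic H]
    {M : ∀ i, Subgroup (G i)} [∀ i, (M i).Normal] [∀ i, (M i).FiniteIndex] {N : Subgroup H}
    (hM : ∀ i, (M i).comap (φ i) = N) :
    ∃ (Z : Type (max u v)) (_ : Finite Z) (ψ : PushoutI φ →* Equiv.Perm Z),
      ψ.ker.comap (PushoutI.base φ) = N := by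
  obtain ⟨h, hh⟩ := IsCyclic.exists_generator (α := H)
  have hM' (i : ι) (x : H) : (φ i x : G i ⧸ M i) = 1 ↔ x ∈ N := by
    rw [QuotientGroup.eq_one_iff, ← mem_comap, hM]
  have horder (i j : ι) : orderOf (φ i h : G i ⧸ M i) = orderOf (φ j h : G j ⧸ M j) := by
    refine orderOf_eq_orderOf_iff.2 fun n ↦ ?_
    simp only [← QuotientGroup.mk_pow, ← map_pow, hM']
  obtain ⟨Z, _, r, τ, hr, hτ⟩ := exists_injective_perm_apply_eq horder
  let s (i : ι) : G i →* Equiv.Perm Z := (r i).comp (QuotientGroup.mk' (M i))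
  have hsτ (i : ι) : s i (φ i h) = τ := hτ i
  let i₀ : ι := Classical.arbitrary ι
  have hs (i : ι) : (s i).comp (φ i) = (s i₀).comp (φ i₀) := by
    ext1 x
    obtain ⟨n, rfl⟩ := hh x
    simp [hsτ]
  refine ⟨Z, inferInstance, PushoutI.lift s _ hs, ?_⟩
  ext x
  rw [mem_comap, MonoidHom.mem_ker, PushoutI.lift_base, ← hM' i₀]
  exact map_eq_one_iff _ (hr i₀)

theorem exists_finiteIndex_inf_zpowers_base_le [Finite ι] [Nonempty ι]
    (hφ : ∀ i, Function.Injective (φ i)) (hnormal : ∀ i, (φ i).range.Normal) {h : H}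
    (hh : ∀ x, x ∈ zpowers h) (hG : ∀ i, SubgroupSeparable (G i)) {m : ℤ} (hm : m ≠ 0) :
    ∃ M : Subgroup (PushoutI φ), M.FiniteIndex ∧
      M ⊓ zpowers (PushoutI.base φ h) ≤ zpowers (PushoutI.base φ h ^ m) := by
  have : IsCyclic H := ⟨h, hh⟩
  choose M _ _ hM using fun i ↦
    (hG i).exists_normal_inf_zpowers_eq (range_eq_zpowers (φ i) hh ▸ hnormal i) hm
  have hcomap (i : ι) : (M i).comap (φ i) = zpowers (h ^ m) := by
    apply map_injective (hφ i)
    rw [map_comap_eq, inf_comm, range_eq_zpowers _ hh, hM, MonoidHom.map_zpowers, map_zpow]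
  obtain ⟨Z, _, ψ, hψ⟩ := exists_finite_perm_comap_base_ker_eq hcomap
  refine ⟨ψ.ker, inferInstance, ?_⟩
  rw [← range_eq_zpowers _ hh, inf_comm, ← map_comap_eq, hψ, MonoidHom.map_zpowers, map_zpow]

theorem normal_range_base (hnormal : ∀ i, (φ i).range.Normal) :
    (PushoutI.base φ).range.Normal := by
  refine ⟨fun n hn x ↦ ?_⟩
  induction x using PushoutI.induction_on generalizing n with
  | of i g =>
    obtain ⟨h, rfl⟩ := hn
    obtain ⟨h', hh'⟩ := (hnormal i).conj_mem _ ⟨h, rfl⟩ g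
    exact ⟨h', by simp [← PushoutI.of_apply_eq_base φ i, hh']⟩
  | base h => exact mul_mem (mul_mem ⟨h, rfl⟩ hn) (inv_mem ⟨h, rfl⟩)
  | mul x y ihx ihy => simpa [mul_assoc] using ihx _ (ihy _ hn)

variable (φ) in
/-- The quotient map of an amalgam by its amalgamated subgroup, which is normal when it is normal in
each factor; the quotient is realised as the free product of the quotients of the factors. -/
def toCoprodIQuotient [∀ i, (φ i).range.Normal] :
    PushoutI φ →* CoprodI fun i ↦ G i ⧸ (φ i).range :=
  PushoutI.lift (fun i ↦ CoprodI.of.comp (QuotientGroup.mk' _)) 1 fun i ↦ by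
    ext h
    have : (φ i h : G i ⧸ (φ i).range) = 1 := (QuotientGroup.eq_one_iff _).2 ⟨h, rfl⟩
    simp [this]

theorem ker_toCoprodIQuotient [hnormal : ∀ i, (φ i).range.Normal] :
    (toCoprodIQuotient φ).ker = (PushoutI.base φ).range := by
  have := normal_range_base hnormal
  refine le_antisymm ?_ ?_
  · have hle (i : ι) : (φ i).range ≤ (PushoutI.base φ).range.comap (PushoutI.of i) := by
      rintro _ ⟨h, rfl⟩
      exact ⟨h, (PushoutI.of_apply_eq_base φ i h).symm⟩
    let s : (CoprodI fun i ↦ G i ⧸ (φ i).range) →* PushoutI φ ⧸ (PushoutI.base φ).range :=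
      CoprodI.lift fun i ↦ QuotientGroup.map _ _ (PushoutI.of i) (hle i)
    have hs : s.comp (toCoprodIQuotient φ) = QuotientGroup.mk' _ := by
      refine PushoutI.hom_ext (fun i ↦ ?_) ?_
      · ext g
        simp [s, toCoprodIQuotient]
      · ext h
        have hh : (PushoutI.base φ h : PushoutI φ ⧸ (PushoutI.base φ).range) = 1 :=
          (QuotientGroup.eq_one_iff _).2 ⟨h, rfl⟩
        simp [s, toCoprodIQuotient, hh]
    rw [← QuotientGroup.ker_mk' (PushoutI.base φ).range, ← hs,
      ← MonoidHom.comap_ker]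
    exact ker_le_comap _ _
  · rintro _ ⟨h, rfl⟩
    simp [toCoprodIQuotient, MonoidHom.mem_ker]

end Amalgam

section AmalgamatedProduct

variable {A B : Type} [Group A] [Group B] {H : Subgroup A} {K : Subgroup B}

theorem amalgMaps_injective (φ : H ≃* K) (b : Bool) : Function.Injective (amalgMaps H K φ b) :=
  match b with
  | true => H.subtype_injective
  | false => K.subtype_injective.comp φ.injective

theorem normal_range_amalgMaps (hH : H.Normal) (hK : K.Normal) (φ : H ≃* K) (b : Bool) :
    (amalgMaps H K φ b).range.Normal := by
  cases b
  · have hrange : (K.subtype.comp φ.toMonoidHom).range = K := by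
      rw [MonoidHom.range_comp, MonoidHom.range_eq_top.2 φ.surjective, ← MonoidHom.range_eq_map,
        K.range_subtype]
    exact hrange.symm ▸ hK
  · exact H.range_subtype.symm ▸ hH

theorem subgroupSeparable_amalgFactor (hA : SubgroupSeparable A) (hB : SubgroupSeparable B)
    (b : Bool) : SubgroupSeparable (amalgFactor A B b) :=
  match b with
  | true => hA
  | false => hB

end AmalgamatedProduct

theorem subgroupSeparable_amalgamatedProduct_of_cyclic_general {ι : Type v} [Finite ι] [Nonempty ι]
    {H : Type w} [Group H] [IsCyclic H] {G : ι → Type u} [∀ i, Group (G i)] {φ : ∀ i, H →* G i}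
    (hφ : ∀ i, Function.Injective (φ i)) (hnormal : ∀ i, (φ i).range.Normal)
    (hG : ∀ i, SubgroupSeparable (G i)) : SubgroupSeparable (Monoid.PushoutI φ) := by
  obtain ⟨h, hh⟩ := IsCyclic.exists_generator (α := H)
  have hfg (i : ι) : (φ i).range.FG := range_eq_zpowers (φ i) hh ▸ fg_zpowers _
  have hQ := SubgroupSeparable.coprodI fun i ↦ (hG i).quotient (hfg i)
  exact hQ.of_ker_eq_zpowers (ker_toCoprodIQuotient.trans (range_eq_zpowers _ hh)) fun _ ↦
    exists_finiteIndex_inf_zpowers_base_le hφ hnormal hh hG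

/-- If `A` and `B` are subgroup separable and `H` and `K` are cyclic normal subgroups of `A`
and `B` respectively, then the generalized free product `(A ∗ B; H = K, φ)` is subgroup
separable. -/
theorem subgroupSeparable_amalgamatedProduct_of_cyclic {A B : Type} [Group A] [Group B]
    (H : Subgroup A) (K : Subgroup B) (φ : H ≃* K)
    (hHnormal : H.Normal) (hKnormal : K.Normal)
    (hHcyclic : IsCyclic ↥H) (hKcyclic : IsCyclic ↥K)
    (hA : SubgroupSeparable A) (hB : SubgroupSeparable B) :
    SubgroupSeparable (AmalgamatedProduct H K φ) :=
  subgroupSeparable_amalgamatedProduct_of_cyclic_general (amalgMaps_injective φ)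
    (normal_range_amalgMaps hHnormal hKnormal φ) (subgroupSeparable_amalgFactor hA hB)
end

section
/- Let n be an integer with |n| > 1 and let G(1,n) = ⟨a, b ; a⁻¹ba = bⁿ⟩ be the Baumslag–Solitar group. Then the cyclic subgroup of G(1,n) generated by the element b is not finitely separable in G(1,n). -/
/-- The single defining relation `a⁻¹ bᵐ a (bⁿ)⁻¹` of the Baumslag–Solitar group, as a
subset of the free group on two generators (`false` plays the role of `a`, `true` of `b`). -/
def bsRel (m n : ℤ) : Set (FreeGroup Bool) :=
  {(FreeGroup.of false)⁻¹ * (FreeGroup.of true) ^ m * FreeGroup.of false *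
    ((FreeGroup.of true) ^ n)⁻¹}

/-- The Baumslag–Solitar group `G(m,n) = ⟨a, b ; a⁻¹ bᵐ a = bⁿ⟩`. -/
abbrev BaumslagSolitar (m n : ℤ) : Type :=
  PresentedGroup (bsRel m n)

/-!
A finitely separable subgroup `H` cannot be conjugated onto a proper subgroup of itself: in a
finite quotient a conjugate of the image of `H` that lies inside the image is all of it, and such
quotients detect membership in `H`. When `m ∣ n`, conjugation by `a⁻¹` maps `⟨bᵐ⟩` onto
`⟨bⁿ⟩ ≤ ⟨bᵐ⟩`, so `a bᵐ a⁻¹` would have to lie in `⟨bᵐ⟩`. Letting `a` act on `ℚ` by scaling by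
`m / n` and `b` by translation by `1` shows that it does not, unless `n ∣ m`.
-/

theorem FinitelySeparable.mem_normalizer_of_conj_mem {G : Type*} [Group G] {H : Subgroup G}
    (hH : FinitelySeparable H) {g : G} (hg : ∀ x ∈ H, g * x * g⁻¹ ∈ H) :
    g ∈ Subgroup.normalizer (H : Set G) := by
  refine Subgroup.mem_normalizer_iff.mpr fun x => ⟨hg x, fun hx => ?_⟩
  by_contra hxH
  obtain ⟨Q, _, _, f, -, hf⟩ := hH x hxH
  have hfg : f g ∈ Subgroup.normalizer (H.map f : Set Q) := by
    refine Subgroup.mem_normalizer_fintype ?_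
    rintro _ ⟨y, hy, rfl⟩
    exact ⟨g * y * g⁻¹, hg y hy, by simp only [map_mul, map_inv]⟩
  refine hf ((Subgroup.mem_normalizer_iff.mp hfg (f x)).mpr ?_)
  simpa only [map_mul, map_inv] using Subgroup.mem_map_of_mem f hx

namespace BaumslagSolitar

variable {m n : ℤ}

/-- The generator `a` of `G(m,n)`, which conjugates `bᵐ` to `bⁿ`. -/
abbrev a : BaumslagSolitar m n := PresentedGroup.of false

/-- The generator `b` of `G(m,n)`. -/
abbrev b : BaumslagSolitar m n := PresentedGroup.of true

theorem inv_a_mul_b_zpow_mul_a : (a⁻¹ * b ^ m * a : BaumslagSolitar m n) = b ^ n :=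
  mul_inv_eq_one.mp (PresentedGroup.one_of_mem (Set.mem_singleton _))

/-- The universal property of `G(m,n)`: the homomorphism sending `a` to `x` and `b` to `y`. -/
def lift {G : Type*} [Group G] (x y : G) (h : x⁻¹ * y ^ m * x = y ^ n) :
    BaumslagSolitar m n →* G :=
  PresentedGroup.toGroup (f := (cond · y x)) fun r hr => by
    rw [Set.mem_singleton_iff.mp hr]
    simpa [mul_inv_eq_one] using h

@[simp]
theorem lift_a {G : Type*} [Group G] {x y : G} (h : x⁻¹ * y ^ m * x = y ^ n) :
    lift x y h a = x :=
  PresentedGroup.toGroup.of _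

@[simp]
theorem lift_b {G : Type*} [Group G] {x y : G} (h : x⁻¹ * y ^ m * x = y ^ n) :
    lift x y h b = y :=
  PresentedGroup.toGroup.of _

/-- The affine action of `G(m,n)` on `ℚ`, with `a` scaling by `m / n` and `b` translating by `1`.
It detects which powers of `b` a conjugate of a power of `b` can equal. -/
def affineAction (hm : m ≠ 0) (hn : n ≠ 0) : BaumslagSolitar m n →* Equiv.Perm ℚ :=
  lift (Equiv.mulLeft₀ (m / n : ℚ) (by positivity)) (Equiv.addRight 1) <| by
    ext x
    simp only [Equiv.zsmul_addRight, zsmul_eq_mul, mul_one, Equiv.Perm.coe_mul,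
      Equiv.Perm.coe_inv, Equiv.mulLeft₀_symm_apply, inv_div, Equiv.coe_addRight,
      Equiv.mulLeft₀_apply, Function.comp_apply]
    field_simp

theorem affineAction_a_apply (hm : m ≠ 0) (hn : n ≠ 0) (x : ℚ) :
    affineAction hm hn a x = m / n * x := by
  simp [affineAction]

theorem affineAction_b (hm : m ≠ 0) (hn : n ≠ 0) :
    affineAction hm hn b = Equiv.addRight 1 := by
  simp [affineAction]

theorem mul_dvd_mul_of_a_conj_b_zpow_mem_zpowers (hm : m ≠ 0) (hn : n ≠ 0) {k l : ℤ}
    (h : (a * b ^ k * a⁻¹ : BaumslagSolitar m n) ∈ Subgroup.zpowers (b ^ l)) :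
    n * l ∣ m * k := by
  obtain ⟨j, hj⟩ := Subgroup.mem_zpowers_iff.mp h
  have hconj : (b ^ (l * j) * a : BaumslagSolitar m n) = a * b ^ k := by
    rw [zpow_mul, hj, inv_mul_cancel_right]
  have hrat : (l * j : ℚ) = m / n * k := by
    simpa [affineAction_a_apply, affineAction_b, Equiv.Perm.mul_apply] using
      congrArg (affineAction hm hn · 0) hconj
  field_simp at hrat
  refine ⟨j, ?_⟩
  rw [mul_assoc, mul_comm n]
  exact_mod_cast hrat.symm

theorem inv_a_conj_mem_zpowers_b_zpow (hmn : m ∣ n) {x : BaumslagSolitar m n}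
    (hx : x ∈ Subgroup.zpowers (b ^ m)) : a⁻¹ * x * a ∈ Subgroup.zpowers (b ^ m) := by
  obtain ⟨k, rfl⟩ := Subgroup.mem_zpowers_iff.mp hx
  have hconj : (a⁻¹ * (b ^ m) ^ k * a : BaumslagSolitar m n) = (b ^ n) ^ k := by
    simpa only [inv_inv, inv_a_mul_b_zpow_mul_a] using
      (conj_zpow (a := (a : BaumslagSolitar m n)⁻¹) (b := b ^ m) (i := k)).symm
  obtain ⟨c, rfl⟩ := hmn
  rw [hconj, zpow_mul]
  exact zpow_mem (zpow_mem (Subgroup.mem_zpowers _) c) k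

end BaumslagSolitar

open BaumslagSolitar in
theorem not_finitelySeparable_zpowers_b_general {m n : ℤ} (hn : n ≠ 0) (hmn : m ∣ n)
    (hnm : ¬ n ∣ m) :
    ¬ FinitelySeparable (Subgroup.zpowers (b ^ m : BaumslagSolitar m n)) := by
  intro hsep
  have hm : m ≠ 0 := ne_zero_of_dvd_ne_zero hn hmn
  have hnorm := hsep.mem_normalizer_of_conj_mem (g := a⁻¹) fun _ hx => by
    simpa only [inv_inv] using inv_a_conj_mem_zpowers_b_zpow hmn hx
  have hconj : (a * b ^ m * a⁻¹ : BaumslagSolitar m n) ∈ Subgroup.zpowers (b ^ m) :=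
    (Subgroup.mem_normalizer_iff.mp (inv_mem_iff.mp hnorm) _).mp (Subgroup.mem_zpowers _)
  exact hnm (Int.dvd_of_mul_dvd_mul_right hm (mul_dvd_mul_of_a_conj_b_zpow_mem_zpowers hm hn hconj))

/-- If `|n| > 1` then the cyclic subgroup generated by `b` in the Baumslag–Solitar group
`G(1,n) = ⟨a, b ; a⁻¹ b a = bⁿ⟩` is not finitely separable. -/
theorem not_finitelySeparable_zpowers_b (n : ℤ) (hn : 1 < |n|) :
    ¬ FinitelySeparable
        (Subgroup.zpowers (PresentedGroup.of true : BaumslagSolitar 1 n)) := by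
  have hunit : ¬ n ∣ 1 := fun h => hn.ne' (Int.isUnit_iff_abs_eq.mp (isUnit_of_dvd_one h))
  simpa using not_finitelySeparable_zpowers_b_general (abs_pos.mp (by lia)) (one_dvd n) hunit
end
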